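/- Let V be a finite-dimensional complex vector space, B a symmetric bilinear form on V, m a positive even integer, ζ ∈ ℂ a primitive m-th root of unity, γ ∈ GL(V) with B(γa, γb) = B(a,b) for all a,b and γ^m = −id, and x ∈ End(V) with B(xa, b) + B(a, xb) = 0 for all a,b and γ∘x = ζ·(x∘γ). Then for every eigenvector v of γ and all r, s ∈ ℕ, one has B(x^r v, x^s v) = 0; in other words, the cyclic ℂ[x]-submodule generated by any γ-eigenvector is isotropic for B. -/

import Mathlib

/-!
Every eigenvector `w` of `γ`, say with eigenvalue `ν`, is isotropic: if `m = 2j`, then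
`B(w, w) = B(γ^j w, γ^j w) = ν^{2j} B(w, w) = B(γ^m w, w) = -B(w, w)`.
Since `γ x = ζ x γ`, each `x^k v` is again an eigenvector of `γ` or zero. Finally, skew-adjointness
of `x` gives `B(x^r v, x^s v) = (-1)^r B(v, x^{r+s} v)`. This is `± B(x^k v, x^k v)` if
`r + s = 2k`, and it vanishes if `r + s` is odd, because `x^{r+s}` is then skew-adjoint for the
symmetric form `B`.
-/

section

open LinearMap Module

theorem eq_zero_of_eq_neg_of_isLeftRegular_two {R : Type*} [Ring R] (h2 : IsLeftRegular (2 : R))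
    {c : R} (hc : c = -c) : c = 0 :=
  h2.mul_left_eq_zero_iff.mp ((two_mul c).trans (add_eq_zero_iff_eq_neg.mpr hc))

theorem isAdjointPair_pow {R V M : Type*} [CommSemiring R] [AddCommMonoid V] [Module R V]
    [AddCommMonoid M] [Module R M] {I : R →+* R} {B : V →ₗ[R] V →ₛₗ[I] M} {f g : End R V}
    (h : IsAdjointPair B B f g) (n : ℕ) : IsAdjointPair B B ⇑(f ^ n) ⇑(g ^ n) := by
  induction n with
  | zero => exact isAdjointPair_one
  | succ n ih =>
    rw [pow_succ f, pow_succ' g]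
    exact ih.mul h

variable {R V : Type*} [CommRing R] [AddCommGroup V] [Module R V]

section Eigenspace

variable {g x : End R V} {v : V} {μ : R}

theorem pow_apply_of_mem_eigenspace (hv : v ∈ End.eigenspace g μ) (n : ℕ) :
    (g ^ n) v = μ ^ n • v := by
  obtain rfl | hv0 := eq_or_ne v 0
  · simp
  · exact End.HasEigenvector.pow_apply ⟨hv, hv0⟩ n

theorem pow_apply_mem_eigenspace_of_mul_eq_smul_mul {ζ : R} (hgx : g * x = ζ • (x * g))
    (hv : v ∈ End.eigenspace g μ) (n : ℕ) : (x ^ n) v ∈ End.eigenspace g (ζ ^ n * μ) := by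
  have hsemi : SemiconjBy g x (ζ • x) := hgx.trans (smul_mul_assoc ζ x g).symm
  have hpow : g * x ^ n = ζ ^ n • (x ^ n * g) := by
    rw [(hsemi.pow_right n).eq, smul_pow, smul_mul_assoc]
  rw [End.mem_eigenspace_iff] at hv ⊢
  rw [← End.mul_apply, hpow, LinearMap.smul_apply, End.mul_apply, hv, map_smul, smul_smul]

end Eigenspace

section SkewAdjoint

variable {M : Type*} [AddCommGroup M] [Module R M] {B : V →ₗ[R] V →ₗ[R] M} {x : End R V}

theorem isAdjointPair_pow_neg_pow (hx : B.IsSkewAdjoint x) (n : ℕ) :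
    IsAdjointPair B B ⇑(x ^ n) ⇑((-x) ^ n) :=
  isAdjointPair_pow (g := -x) hx n

theorem isSkewAdjoint_pow_of_odd (hx : B.IsSkewAdjoint x) {n : ℕ} (hn : Odd n) :
    B.IsSkewAdjoint ⇑(x ^ n) := by
  have h := isAdjointPair_pow_neg_pow hx n
  rwa [hn.neg_pow] at h

theorem apply_pow_apply_pow_of_isSkewAdjoint (hx : B.IsSkewAdjoint x) (r s : ℕ) (a b : V) :
    B ((x ^ r) a) ((x ^ s) b) = (-1 : R) ^ r • B a ((x ^ (r + s)) b) := by
  have hneg : (-x) ^ r = (-1 : R) ^ r • x ^ r := by rw [← smul_pow, neg_one_smul]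
  rw [isAdjointPair_pow_neg_pow hx r, hneg, LinearMap.smul_apply, map_smul,
    pow_add, End.mul_apply]

end SkewAdjoint

section BilinForm

variable {B : LinearMap.BilinForm R V} {g x : End R V} {v : V}

theorem isOrthogonal_iterate {f : V → V} (hf : B.IsOrthogonal f) (n : ℕ) :
    B.IsOrthogonal f^[n] := by
  induction n with
  | zero => exact fun _ _ ↦ rfl
  | succ n ih => exact fun a b ↦ (ih (f a) (f b)).trans (hf a b)

theorem apply_self_eq_zero_of_mem_eigenspace (h2 : IsLeftRegular (2 : R)) {m : ℕ} (hm : Even m)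
    (hg : B.IsOrthogonal g) (hgm : g ^ m = -1) {μ : R} (hv : v ∈ End.eigenspace g μ) :
    B v v = 0 := by
  obtain ⟨j, rfl⟩ := hm
  apply eq_zero_of_eq_neg_of_isLeftRegular_two h2
  calc B v v = B ((g ^ j) v) ((g ^ j) v) := by
        rw [End.pow_apply, isOrthogonal_iterate hg]
    _ = B ((g ^ (j + j)) v) v := by
        simp only [pow_add, End.mul_apply, pow_apply_of_mem_eigenspace hv, map_smul,
          LinearMap.smul_apply]
    _ = -B v v := by rw [hgm, LinearMap.neg_apply, End.one_apply, map_neg, LinearMap.neg_apply]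

theorem apply_apply_self_eq_zero_of_isSkewAdjoint (h2 : IsLeftRegular (2 : R)) (hB : B.IsSymm)
    {f : V → V} (hf : B.IsSkewAdjoint f) (v : V) : B v (f v) = 0 := by
  apply eq_zero_of_eq_neg_of_isLeftRegular_two h2
  calc B v (f v) = B (f v) v := hB.eq v (f v)
    _ = B v (-f v) := hf v v
    _ = -B v (f v) := map_neg _ _

theorem apply_pow_apply_pow_eq_zero_of_isSkewAdjoint (h2 : IsLeftRegular (2 : R)) (hB : B.IsSymm)
    (hx : B.IsSkewAdjoint x) (hv : ∀ k, B ((x ^ k) v) ((x ^ k) v) = 0) (r s : ℕ) :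
    B ((x ^ r) v) ((x ^ s) v) = 0 := by
  suffices h : B v ((x ^ (r + s)) v) = 0 by
    rw [apply_pow_apply_pow_of_isSkewAdjoint hx, h, smul_zero]
  obtain ⟨k, hk⟩ | hodd := (r + s).even_or_odd
  · have hsign : (-1 : R) ^ k • B v ((x ^ (k + k)) v) = 0 := by
      rw [← apply_pow_apply_pow_of_isSkewAdjoint hx, hv]
    rw [hk]
    exact (isUnit_neg_one.pow k).smul_eq_zero.mp hsign
  · exact apply_apply_self_eq_zero_of_isSkewAdjoint h2 hB (isSkewAdjoint_pow_of_odd hx hodd) v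

theorem typeBDII_cyclic_submodule_isotropic_general (h2 : IsLeftRegular (2 : R)) (hB : B.IsSymm)
    {m : ℕ} (hm : Even m) (hg : B.IsOrthogonal g) (hgm : g ^ m = -1) (hx : B.IsSkewAdjoint x)
    {ζ μ : R} (hgx : g * x = ζ • (x * g)) (hv : v ∈ End.eigenspace g μ) (r s : ℕ) :
    B ((x ^ r) v) ((x ^ s) v) = 0 :=
  apply_pow_apply_pow_eq_zero_of_isSkewAdjoint h2 hB hx
    (fun k ↦ apply_self_eq_zero_of_mem_eigenspace h2 hm hg hgm
      (pow_apply_mem_eigenspace_of_mul_eq_smul_mul hgx hv k)) r s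

end BilinForm

end

/-- Type BDII isotropy: for `x ∈ 𝔤₁` of a type BDII grading of `𝔰𝔬(V, B)` (with
`γ^m = −id`), the cyclic `ℂ[x]`-submodule generated by any `γ`-eigenvector is isotropic
for `B`. -/
theorem typeBDII_cyclic_submodule_isotropic
    {V : Type*} [AddCommGroup V] [Module ℂ V] [FiniteDimensional ℂ V]
    (B : V →ₗ[ℂ] V →ₗ[ℂ] ℂ) (hB : ∀ a b : V, B a b = B b a)
    (m : ℕ) (hm : 0 < m) (hme : Even m) (ζ : ℂ) (hζ : IsPrimitiveRoot ζ m)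
    (γ : V ≃ₗ[ℂ] V) (hγB : ∀ a b : V, B (γ a) (γ b) = B a b)
    (hγm : ∀ v : V, (γ ^ m) v = -v)
    (x : Module.End ℂ V) (hxB : ∀ a b : V, B (x a) b + B a (x b) = 0)
    (hγx : γ.toLinearMap ∘ₗ x = ζ • (x ∘ₗ γ.toLinearMap)) :
    ∀ (v : V) (μ : ℂ), v ≠ 0 → γ v = μ • v →
      ∀ r s : ℕ, B ((x ^ r) v) ((x ^ s) v) = 0 := by
  intro v μ _ hv
  have hγm' : (γ : Module.End ℂ V) ^ m = -1 := by
    ext a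
    simpa [Module.End.pow_apply, LinearEquiv.pow_apply] using hγm a
  have hx : LinearMap.IsSkewAdjoint B x := fun a b ↦ by
    simpa using eq_neg_of_add_eq_zero_left (hxB a b)
  exact typeBDII_cyclic_submodule_isotropic_general (IsRegular.of_ne_zero two_ne_zero).left ⟨hB⟩
    hme hγB hγm' hx hγx (Module.End.mem_eigenspace_iff.mpr hv)
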